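/- For every real q with 0 < q < 1, the inequality (ln q/(q−1))⁴ − 3(ln q/(q−1))(ln q/(q³−1)) + 3(ln q/(q²−1))² > 0 holds. -/

import Mathlib

/-- For `0 < q < 1`, the inequality
`(ln q/(q−1))⁴ − 3(ln q/(q−1))(ln q/(q³−1)) + 3(ln q/(q²−1))² > 0` holds. -/
theorem log_q_inequality (q : ℝ) (hq0 : 0 < q) (hq1 : q < 1) :
    0 < (Real.log q / (q - 1)) ^ 4
        - 3 * (Real.log q / (q - 1)) * (Real.log q / (q ^ 3 - 1))
        + 3 * (Real.log q / (q ^ 2 - 1)) ^ 2 := by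
  have hne : q - 1 ≠ 0 := by linarith
  have h1 : 1 ≤ Real.log q / (q - 1) := by
    rw [le_div_iff_of_neg (by linarith)]
    linarith [Real.log_le_sub_one_of_pos hq0]
  have e3 : Real.log q / (q ^ 3 - 1) = Real.log q / (q - 1) / (1 + q + q ^ 2) := by
    rw [div_div]; congr 1; ring
  have e2 : Real.log q / (q ^ 2 - 1) = Real.log q / (q - 1) / (1 + q) := by
    rw [div_div]; congr 1; ring
  rw [e3, e2]
  generalize Real.log q / (q - 1) = A at h1
  have hp : 0 < 1 + q + q ^ 2 := by positivity
  have hp2 : 0 < 1 + q := by positivity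
  have e : A ^ 4 - 3 * A * (A / (1 + q + q ^ 2)) + 3 * (A / (1 + q)) ^ 2
      = A ^ 2 * ((A ^ 2 - 1)
        + (1 + 4 * q ^ 2 + 3 * q ^ 3 + q ^ 4) / ((1 + q + q ^ 2) * (1 + q) ^ 2)) := by
    field_simp
    ring
  rw [e]
  have hA : 0 ≤ A ^ 2 - 1 := by nlinarith
  have hA0 : 0 < A := by linarith
  positivity
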